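/- arXiv:1803.07705 — 3 statements merged into one kernel-verified Lean document; each statement's English description precedes it below -/
import Mathlib

section
/- Fix a strongly connected directed weighted graph G = (V, E, W) with n nodes and integer travel times (w_{ij} ≥ 1 on edges, 0 otherwise), a stationary distribution π > 0, and ε > 0 such that the ε-conforming set P^ε_{G,π} is nonempty. Then there exist constants c > 0 and λ_max ∈ (0,1) such that for every P ∈ P^ε_{G,π}, every state i, and every k ∈ ℤ_{>0}, the first return probability satisfies F_k(i,i) ≤ c·λ_max^k. -/
open scoped BigOperators

/-- The set of Markov chains `ε`-conforming to a directed graph with adjacency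
relation `Adj` and stationary distribution `pivec`:
`p_{ij} ≥ ε` on edges, `p_{ij} = 0` off edges, rows sum to one, and `pivec` is
stationary. -/
def Conf {n : ℕ} (Adj : Fin n → Fin n → Prop) (pivec : Fin n → ℝ) (ε : ℝ) :
    Set (Matrix (Fin n) (Fin n) ℝ) :=
  {P | (∀ i j, Adj i j → ε ≤ P i j) ∧ (∀ i j, ¬ Adj i j → P i j = 0) ∧
    (∀ i, ∑ j, P i j = 1) ∧ (∀ j, ∑ i, pivec i * P i j = pivec j)}

/-- The first hitting time probabilities `F_k(i,j)` for a chain `P` with travel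
times `W`: `F_k(i,j) = p_{ij}·1{k = w_{ij}} + Σ_{h≠j} p_{ih} F_{k−w_{ih}}(h,j)`
for `k ≥ 1`, and `F_k = 0` for `k ≤ 0`. -/
def IsHittingProb {n : ℕ} (P : Matrix (Fin n) (Fin n) ℝ)
    (W : Matrix (Fin n) (Fin n) ℕ) (F : ℤ → Fin n → Fin n → ℝ) : Prop :=
  (∀ k : ℤ, k ≤ 0 → ∀ i j, F k i j = 0) ∧
    ∀ k : ℤ, 1 ≤ k → ∀ i j,
      F k i j = (if k = (W i j : ℤ) then P i j else 0) +
        ∑ h : Fin n, if h = j then 0 else P i h * F (k - (W i h : ℤ)) h j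

/-!
Let `d` be the graph distance to the target `j`. Every state `i ≠ j` has an edge, of probability at
least `ε`, to a state with smaller `d`, so for small `a > 0` the function `U i = 2 - a ^ d i`,
whose values lie in `[1, 2]`, satisfies `P U ≤ ρ U` off `j` with a factor `ρ < 1` that depends on
neither `P` nor `j`. A jump takes at most `M` units of time, so with `λ ^ M = ρ` the discount
`λ ^ w` of a jump of length `w` never falls below the contraction `ρ` gained by it. Unfolding the
recursion once then carries the bound `F_k(i,j) ≤ U i * λ ^ k` from earlier times to time `k`.
-/

open Matrix Relation Set

/-- A function `f`, where `f k i` stands for `F_k(i,j)`, that satisfies the hitting-time recursion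
to the single target `j` as a system of inequalities, which is all that upper bounds require. -/
structure IsHittingSubsolution {V : Type*} [Fintype V] [DecidableEq V] (P : Matrix V V ℝ)
    (W : Matrix V V ℕ) (j : V) (f : ℤ → V → ℝ) : Prop where
  nonpos : ∀ k ≤ 0, ∀ i, f k i ≤ 0
  le_step : ∀ k ≥ 1, ∀ i, f k i ≤
    (if k = W i j then P i j else 0) + ∑ h ∈ Finset.univ.erase j, P i h * f (k - W i h) h

/-- The `ε`-conforming condition without stationarity and for substochastic matrices, that is, for
chains that may be killed. -/
structure IsSubconforming {V : Type*} [Fintype V] (Adj : V → V → Prop) (ε : ℝ)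
    (P : Matrix V V ℝ) : Prop where
  le_of_adj : ∀ i j, Adj i j → ε ≤ P i j
  eq_zero_of_not_adj : ∀ i j, ¬ Adj i j → P i j = 0
  sum_le_one : ∀ i, ∑ j, P i j ≤ 1

/-- A Foster–Lyapunov function for hitting `j`: it contracts by the factor `ρ` in conditional mean
as long as the chain is away from `j`. The lower bound is normalised to `1`. -/
structure IsLyapunov {V : Type*} [Fintype V] (P : Matrix V V ℝ) (j : V) (ρ : ℝ)
    (U : V → ℝ) : Prop where
  one_le : ∀ i, 1 ≤ U i
  mulVec_le : ∀ i, i ≠ j → (P *ᵥ U) i ≤ ρ * U i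

theorem exists_rank_lt_of_reflTransGen {α : Type*} (r : α → α → Prop) (j : α) :
    ∃ d : α → ℕ, ∀ i, i ≠ j → ReflTransGen r i j → ∃ h, r i h ∧ d h < d i := by
  let lengths (i : α) : Set ℕ :=
    {m | ∃ l, (i :: l).IsChain r ∧ (i :: l).getLast (by simp) = j ∧ l.length = m}
  refine ⟨fun i ↦ sInf (lengths i), fun i hij hreach ↦ ?_⟩
  obtain ⟨l₀, hl₀⟩ := List.exists_isChain_cons_of_relationReflTransGen hreach
  obtain ⟨l, hchain, hlast, hlength⟩ := Nat.sInf_mem (s := lengths i) ⟨_, l₀, hl₀.1, hl₀.2, rfl⟩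
  cases l with
  | nil => exact absurd hlast hij
  | cons h t =>
    rw [List.isChain_cons_cons] at hchain
    have h_le : sInf (lengths h) ≤ t.length := Nat.sInf_le ⟨t, hchain.2, by simpa using hlast, rfl⟩
    refine ⟨h, hchain.1, ?_⟩
    calc sInf (lengths h) < t.length + 1 := Nat.lt_succ_of_le h_le
      _ = sInf (lengths i) := hlength

theorem exists_pow_eq_of_mem_Ioo {ρ : ℝ} (hρ : ρ ∈ Ioo (0 : ℝ) 1) {M : ℕ} (hM : M ≠ 0) :
    ∃ lam ∈ Ioo (0 : ℝ) 1, lam ^ M = ρ :=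
  ⟨ρ ^ (M : ℝ)⁻¹, ⟨Real.rpow_pos_of_pos hρ.1 _, Real.rpow_lt_one hρ.1.le hρ.2 (by positivity)⟩,
    Real.rpow_inv_natCast_pow hρ.1.le hM⟩

theorem mul_mul_zpow_sub_le {ρ lam u : ℝ} {w : ℕ} (hlam : 0 < lam) (hρ : ρ ≤ lam ^ w)
    (hu : 0 ≤ u) (k : ℤ) : ρ * (u * lam ^ (k - w)) ≤ lam ^ k * u :=
  calc ρ * (u * lam ^ (k - w)) ≤ lam ^ w * (u * lam ^ (k - w)) := by gcongr
    _ = lam ^ k * u := by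
      rw [zpow_sub₀ hlam.ne', zpow_natCast]
      field_simp

section

variable {V : Type*} [Fintype V] {Adj : V → V → Prop} {P : Matrix V V ℝ} {W : Matrix V V ℕ}
  {j : V} {ε a ρ lam C : ℝ} {U : V → ℝ} {f : ℤ → V → ℝ}

theorem mulVec_le_of_sum_le_one {i : V} (hP : ∀ h, 0 ≤ P i h) (hsum : ∑ h, P i h ≤ 1)
    (hC : 0 ≤ C) (hU : ∀ h, U h ≤ C) : (P *ᵥ U) i ≤ C :=
  calc (P *ᵥ U) i = ∑ h, P i h * U h := rfl
    _ ≤ ∑ h, P i h * C := by gcongr with h; exacts [hP h, hU h]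
    _ = (∑ h, P i h) * C := (Finset.sum_mul ..).symm
    _ ≤ C := mul_le_of_le_one_left hC hsum

theorem mulVec_const_sub_le {i : V} (hP : ∀ h, 0 ≤ P i h) (hsum : ∑ h, P i h ≤ 1)
    (hC : 0 ≤ C) (hU : ∀ h, 0 ≤ U h) (h : V) :
    (P *ᵥ fun x ↦ C - U x) i ≤ C - P i h * U h := by
  have h_term : P i h * U h ≤ (P *ᵥ U) i :=
    Finset.single_le_sum (f := fun x ↦ P i x * U x) (fun x _ ↦ mul_nonneg (hP x) (hU x))
      (Finset.mem_univ h)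
  have h_const : (P *ᵥ fun _ ↦ C) i ≤ C := mulVec_le_of_sum_le_one hP hsum hC fun _ ↦ le_rfl
  have h_sub : (P *ᵥ fun x ↦ C - U x) i = (P *ᵥ fun _ ↦ C) i - (P *ᵥ U) i :=
    congrFun (mulVec_sub P (fun _ ↦ C) U) i
  linarith

namespace IsSubconforming

theorem nonneg (hP : IsSubconforming Adj ε P) (hε : 0 ≤ ε) (i h : V) : 0 ≤ P i h := by
  by_cases hadj : Adj i h
  · exact hε.trans (hP.le_of_adj i h hadj)
  · exact (hP.eq_zero_of_not_adj i h hadj).ge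

theorem adj_of_ne_zero (hP : IsSubconforming Adj ε P) {i h : V} (hne : P i h ≠ 0) : Adj i h :=
  not_not.mp (mt (hP.eq_zero_of_not_adj i h) hne)

theorem isLyapunov_two_sub_pow (hP : IsSubconforming Adj ε P) (ha : 0 < a) (ha_one : a ≤ 1)
    (haε : 2 * a ≤ ε) {d : V → ℕ} {D : ℕ} (hd : ∀ i, i ≠ j → ∃ h, Adj i h ∧ d h < d i)
    (hD : ∀ i, d i ≤ D) : IsLyapunov P j (1 - a ^ D / 2) (fun i ↦ 2 - a ^ d i) where
  one_le i := by linarith [pow_le_one₀ ha.le ha_one (n := d i)]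
  mulVec_le i hij := by
    obtain ⟨h, hadj, hlt⟩ := hd i hij
    have h_pos : 0 < a ^ d i := pow_pos ha _
    have h_drift : (P *ᵥ fun x ↦ 2 - a ^ d x) i ≤ 2 - P i h * a ^ d h :=
      mulVec_const_sub_le (hP.nonneg (by linarith) i) (hP.sum_le_one i) zero_le_two
        (fun x ↦ (pow_pos ha (d x)).le) h
    have h_gain : 2 * a ^ d i ≤ P i h * a ^ d h :=
      calc 2 * a ^ d i ≤ 2 * a ^ (d h + 1) := by
            gcongr 2 * ?_; exact pow_le_pow_of_le_one ha.le ha_one hlt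
        _ = 2 * a * a ^ d h := by ring
        _ ≤ P i h * a ^ d h := by gcongr; exact haε.trans (hP.le_of_adj i h hadj)
    have h_floor : a ^ D ≤ a ^ d i := pow_le_pow_of_le_one ha.le ha_one (hD i)
    calc (P *ᵥ fun x ↦ 2 - a ^ d x) i ≤ 2 - 2 * a ^ d i := h_drift.trans (by linarith)
      _ ≤ (2 - a ^ d i) - a ^ D / 2 * 2 := by linarith
      _ ≤ (2 - a ^ d i) - a ^ D / 2 * (2 - a ^ d i) := by gcongr; linarith
      _ = (1 - a ^ D / 2) * (2 - a ^ d i) := by ring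

end IsSubconforming

theorem exists_uniform_isLyapunov (Adj : V → V → Prop) (hε : 0 < ε) :
    ∃ ρ ∈ Ioo (0 : ℝ) 1, ∀ j, (∀ i, ReflTransGen Adj i j) → ∃ U : V → ℝ, (∀ i, U i ≤ 2) ∧
      ∀ P, IsSubconforming Adj ε P → IsLyapunov P j ρ U := by
  choose d hd using exists_rank_lt_of_reflTransGen Adj
  obtain ⟨D, hD⟩ := Finite.bddAbove_range fun p : V × V ↦ d p.1 p.2
  obtain ⟨a, ha, ha_one, haε⟩ : ∃ a : ℝ, 0 < a ∧ a ≤ 1 ∧ 2 * a ≤ ε :=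
    ⟨min (ε / 2) 1, by positivity, min_le_right _ _, by linarith [min_le_left (ε / 2) 1]⟩
  have h_pos : 0 < a ^ D := pow_pos ha D
  have h_le_one : a ^ D ≤ 1 := pow_le_one₀ ha.le ha_one
  refine ⟨1 - a ^ D / 2, ⟨by linarith, by linarith⟩, fun j hreach ↦
    ⟨fun i ↦ 2 - a ^ d j i, fun i ↦ by linarith [pow_pos ha (d j i)], fun P hP ↦ ?_⟩⟩
  exact hP.isLyapunov_two_sub_pow ha ha_one haε (fun i hij ↦ hd j i hij (hreach i))
    fun i ↦ hD ⟨(j, i), rfl⟩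

namespace IsHittingSubsolution

variable [DecidableEq V]

theorem mul_le_zpow_mul_mulVec (hf : IsHittingSubsolution P W j f) {i : V}
    (hP : ∀ h, 0 ≤ P i h) (hρ : 0 ≤ ρ) (hlam : 0 < lam) (hρW : ∀ h, ρ ≤ lam ^ W i h)
    (hU : ∀ h, 1 ≤ U h) {k : ℤ} (hk : 1 ≤ k)
    (hprev : ∀ h, h ≠ j → P i h ≠ 0 → f (k - W i h) h ≤ U h * lam ^ (k - W i h)) :
    ρ * f k i ≤ lam ^ k * (P *ᵥ U) i := by
  have hU_nonneg (h : V) : 0 ≤ U h := zero_le_one.trans (hU h)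
  have h_direct : ρ * (if k = W i j then P i j else 0) ≤ lam ^ k * (P i j * U j) := by
    split_ifs with hkW
    · rw [hkW, zpow_natCast]
      exact mul_le_mul (hρW j) (le_mul_of_one_le_right (hP j) (hU j)) (hP j) (by positivity)
    · rw [mul_zero]
      exact mul_nonneg (zpow_nonneg hlam.le k) (mul_nonneg (hP j) (hU_nonneg j))
  have h_via (h : V) (hhj : h ≠ j) :
      ρ * (P i h * f (k - W i h) h) ≤ lam ^ k * (P i h * U h) := by
    rcases eq_or_ne (P i h) 0 with hzero | hne
    · simp [hzero]
    calc ρ * (P i h * f (k - W i h) h) = P i h * (ρ * f (k - W i h) h) := by ring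
      _ ≤ P i h * (ρ * (U h * lam ^ (k - W i h))) := by
          gcongr; exacts [hP h, hprev h hhj hne]
      _ ≤ P i h * (lam ^ k * U h) :=
          mul_le_mul_of_nonneg_left (mul_mul_zpow_sub_le hlam (hρW h) (hU_nonneg h) k) (hP h)
      _ = lam ^ k * (P i h * U h) := by ring
  calc ρ * f k i
      ≤ ρ * (if k = W i j then P i j else 0) +
          ∑ h ∈ Finset.univ.erase j, ρ * (P i h * f (k - W i h) h) := by
        rw [← Finset.mul_sum, ← mul_add]
        exact mul_le_mul_of_nonneg_left (hf.le_step k hk i) hρ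
    _ ≤ lam ^ k * (P i j * U j) + ∑ h ∈ Finset.univ.erase j, lam ^ k * (P i h * U h) :=
        add_le_add h_direct (Finset.sum_le_sum fun h hh ↦ h_via h (Finset.ne_of_mem_erase hh))
    _ = lam ^ k * (P *ᵥ U) i := by
        rw [Finset.add_sum_erase _ (fun h ↦ lam ^ k * (P i h * U h)) (Finset.mem_univ j),
          ← Finset.mul_sum]
        rfl

theorem le_mul_zpow_of_ne (hf : IsHittingSubsolution P W j f) (hP : ∀ i h, 0 ≤ P i h)
    (hW : ∀ i h, P i h ≠ 0 → 1 ≤ W i h) (hρ : 0 < ρ) (hlam : 0 < lam)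
    (hρW : ∀ i h, ρ ≤ lam ^ W i h) (hU : IsLyapunov P j ρ U) {i : V} (hij : i ≠ j) (k : ℤ) :
    f k i ≤ U i * lam ^ k := by
  suffices h_upto : ∀ (N : ℕ) (k : ℤ), k ≤ N → ∀ i, i ≠ j → f k i ≤ U i * lam ^ k from
    h_upto k.toNat k k.self_le_toNat i hij
  have h_base (k : ℤ) (hk : k ≤ 0) (i : V) : f k i ≤ U i * lam ^ k :=
    (hf.nonpos k hk i).trans (mul_nonneg (zero_le_one.trans (hU.one_le i)) (zpow_nonneg hlam.le k))
  intro N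
  induction N with
  | zero => exact fun k hk i _ ↦ h_base k (by simpa using hk) i
  | succ N ih =>
    intro k hkN i hij
    rcases le_or_gt k 0 with hk | hk
    · exact h_base k hk i
    have h_step : ρ * f k i ≤ lam ^ k * (P *ᵥ U) i :=
      hf.mul_le_zpow_mul_mulVec (hP i) hρ.le hlam (hρW i) hU.one_le hk fun h hhj hne ↦
        ih _ (by have := hW i h hne; omega) h hhj
    refine le_of_mul_le_mul_left ?_ hρ
    calc ρ * f k i ≤ lam ^ k * (P *ᵥ U) i := h_step
      _ ≤ lam ^ k * (ρ * U i) := by gcongr; exact hU.mulVec_le i hij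
      _ = ρ * (U i * lam ^ k) := by ring

-- At `i = j` nothing contracts; one more step of the recursion only costs the constant `C / ρ`.
theorem le_div_mul_zpow (hf : IsHittingSubsolution P W j f) (hP : ∀ i h, 0 ≤ P i h)
    (hW : ∀ i h, P i h ≠ 0 → 1 ≤ W i h) (hρ : 0 < ρ) (hlam : 0 < lam)
    (hρW : ∀ i h, ρ ≤ lam ^ W i h) (hU : IsLyapunov P j ρ U) {i : V} (hC : (P *ᵥ U) i ≤ C)
    {k : ℤ} (hk : 1 ≤ k) : f k i ≤ C / ρ * lam ^ k := by
  have h_step : ρ * f k i ≤ lam ^ k * (P *ᵥ U) i :=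
    hf.mul_le_zpow_mul_mulVec (hP i) hρ.le hlam (hρW i) hU.one_le hk fun _ hhj _ ↦
      hf.le_mul_zpow_of_ne hP hW hρ hlam hρW hU hhj _
  rw [div_mul_eq_mul_div, le_div_iff₀' hρ, mul_comm C]
  exact h_step.trans (by gcongr)

end IsHittingSubsolution

theorem uniform_geometric_bound_on_return_probabilities_general [DecidableEq V]
    (Adj : V → V → Prop) (W : Matrix V V ℕ) (hε : 0 < ε) (hW : ∀ i j, Adj i j → 1 ≤ W i j) :
    ∃ c : ℝ, 0 < c ∧ ∃ lam : ℝ, lam ∈ Ioo (0 : ℝ) 1 ∧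
      ∀ P, IsSubconforming Adj ε P → ∀ j, (∀ i, ReflTransGen Adj i j) →
        ∀ f, IsHittingSubsolution P W j f → ∀ i, ∀ k : ℕ, 1 ≤ k → f k i ≤ c * lam ^ k := by
  obtain ⟨ρ, hρ, hLyapunov⟩ := exists_uniform_isLyapunov Adj hε
  obtain ⟨M, hM⟩ := Finite.bddAbove_range fun p : V × V ↦ W p.1 p.2
  obtain ⟨lam, hlam, hpow⟩ := exists_pow_eq_of_mem_Ioo hρ M.succ_ne_zero
  have hρW (i h : V) : ρ ≤ lam ^ W i h :=
    hpow ▸ pow_le_pow_of_le_one hlam.1.le hlam.2.le (Nat.le_succ_of_le (hM ⟨(i, h), rfl⟩))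
  refine ⟨2 / ρ, div_pos two_pos hρ.1, lam, hlam, fun P hP j hreach f hf i k hk ↦ ?_⟩
  obtain ⟨U, hU_le, hU⟩ := hLyapunov j hreach
  rw [← zpow_natCast]
  exact hf.le_div_mul_zpow (hP.nonneg hε.le) (fun i h hne ↦ hW i h (hP.adj_of_ne_zero hne))
    hρ.1 hlam.1 hρW (hU P hP)
    (mulVec_le_of_sum_le_one (hP.nonneg hε.le i) (hP.sum_le_one i) zero_le_two hU_le)
    (by exact_mod_cast hk)

end

theorem isSubconforming_of_mem_conf {n : ℕ} {Adj : Fin n → Fin n → Prop} {pivec : Fin n → ℝ}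
    {ε : ℝ} {P : Matrix (Fin n) (Fin n) ℝ} (hP : P ∈ Conf Adj pivec ε) :
    IsSubconforming Adj ε P :=
  ⟨hP.1, hP.2.1, fun i ↦ (hP.2.2.1 i).le⟩

theorem IsHittingProb.isHittingSubsolution {n : ℕ} {P : Matrix (Fin n) (Fin n) ℝ}
    {W : Matrix (Fin n) (Fin n) ℕ} {F : ℤ → Fin n → Fin n → ℝ} (hF : IsHittingProb P W F)
    (j : Fin n) : IsHittingSubsolution P W j fun k i ↦ F k i j where
  nonpos k hk i := (hF.1 k hk i j).le
  le_step k hk i := by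
    rw [hF.2 k hk i j]
    simp [Finset.sum_ite, Finset.filter_ne']

/-- over the compact set of `ε`-conforming chains there are
uniform constants `c > 0` and `λ_max ∈ (0,1)` such that the first return
probabilities satisfy `F_k(i,i) ≤ c·λ_max^k` for all chains in the set, all
states `i` and all `k ≥ 1`. -/
theorem uniform_geometric_bound_on_return_probabilities {n : ℕ}
    (Adj : Fin n → Fin n → Prop) (W : Matrix (Fin n) (Fin n) ℕ)
    (pivec : Fin n → ℝ) (ε : ℝ)
    (hconn : ∀ i j, Relation.ReflTransGen Adj i j)
    (hW1 : ∀ i j, Adj i j → 1 ≤ W i j)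
    (hW0 : ∀ i j, ¬ Adj i j → W i j = 0)
    (hpi : ∀ i, 0 < pivec i) (hpisum : ∑ i, pivec i = 1)
    (hε : 0 < ε) (hne : (Conf Adj pivec ε).Nonempty)
    (F : Matrix (Fin n) (Fin n) ℝ → ℤ → Fin n → Fin n → ℝ)
    (hF : ∀ P ∈ Conf Adj pivec ε, IsHittingProb P W (F P)) :
    ∃ c : ℝ, 0 < c ∧ ∃ lam : ℝ, lam ∈ Set.Ioo (0 : ℝ) 1 ∧
      ∀ P ∈ Conf Adj pivec ε, ∀ i : Fin n, ∀ k : ℕ, 1 ≤ k →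
        F P k i i ≤ c * lam ^ k := by
  obtain ⟨c, hc, lam, hlam, hbound⟩ :=
    uniform_geometric_bound_on_return_probabilities_general Adj W hε hW1
  exact ⟨c, hc, lam, hlam, fun P hP i k hk ↦ hbound P (isSubconforming_of_mem_conf hP) i
    (hconn · i) _ ((hF P hP).isHittingSubsolution i) i k hk⟩
end

section
/- Fix a strongly connected directed weighted graph G = (V, E, W) with n nodes, a stationary distribution π > 0, and ε > 0 such that P^ε_{G,π} is nonempty. Then for each state i the series H(T_{ii})(P) = −Σ_{k=1}^∞ F_k(i,i) log F_k(i,i) converges uniformly on P^ε_{G,π}, and the functions P ↦ H(T_{ii})(P) and the return time entropy P ↦ J(P) = Σ_{i=1}^n π_i H(T_{ii})(P) are continuous on P^ε_{G,π}. -/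
open scoped BigOperators
open Real Filter

/-!
Every `F_k(i,j)` is continuous in `P`, being computed from the entries of `P` by finitely many sums
and products, so it suffices to dominate `F_k(i,j) log F_k(i,j)` by a summable sequence which does
not depend on `P`. Since `|x log x| ≤ 2 √x` on `[0, 1]`, a uniform geometric bound
`F_k(i,j) ≤ C ρ ^ k` is enough.

The geometric bound comes from a Lyapunov function. Let `d` be an integer potential which decreases
along some edge at every state other than the target `j`. For small `δ > 0` the function
`2 - δ ^ d`, with its value at `j` raised, is contracted by one step of every admissible chain, at a
rate `c < 1` depending only on `δ` and `max d`. A contraction by `ρ ^ M` per step, where `M` bounds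
the travel times, yields a decay by `ρ` per unit of time.
-/

open scoped Matrix
open Matrix (rowStochastic)

lemma exists_rank_of_reflTransGen {α : Type*} {r : α → α → Prop} {b : α}
    (h : ∀ a, Relation.ReflTransGen r a b) :
    ∃ d : α → ℕ, ∀ a ≠ b, ∃ a', d a' < d a ∧ r a a' := by
  classical
  have hwalk : ∀ a, ∃ m, ∃ l : List α, (a :: l).IsChain r ∧
      (a :: l).getLast (List.cons_ne_nil a l) = b ∧ l.length = m := fun a ↦
    let ⟨l, hl, hlast⟩ := List.exists_isChain_cons_of_relationReflTransGen (h a)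
    ⟨l.length, l, hl, hlast, rfl⟩
  refine ⟨fun a ↦ Nat.find (hwalk a), fun a hab ↦ ?_⟩
  obtain ⟨l, hl, hlast, hlen⟩ := Nat.find_spec (hwalk a)
  cases l with
  | nil => exact absurd hlast hab
  | cons a' l =>
    obtain ⟨hr, hl⟩ := List.isChain_cons_cons.1 hl
    refine ⟨a', ?_, hr⟩
    calc Nat.find (hwalk a') ≤ l.length := Nat.find_min' _ ⟨l, hl, hlast, rfl⟩
      _ < (a' :: l).length := Nat.lt_succ_self _
      _ = Nat.find (hwalk a) := hlen

lemma norm_negMulLog_le_two_mul_sqrt {x : ℝ} (h0 : 0 ≤ x) (h1 : x ≤ 1) :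
    ‖negMulLog x‖ ≤ 2 * √x := by
  rcases h0.eq_or_lt with rfl | hpos
  · simp
  have hlog : |log x * √x| ≤ 2 := by
    simpa [sqrt_eq_rpow] using (abs_log_mul_self_rpow_lt x (1 / 2) hpos h1 one_half_pos).le
  have hfactor : negMulLog x = -(log x * √x) * √x := by
    rw [negMulLog]
    linear_combination log x * mul_self_sqrt h0
  rw [hfactor, norm_mul, norm_neg, norm_eq_abs, norm_of_nonneg (sqrt_nonneg x)]
  gcongr

lemma two_mul_pow_le_mulVec {α : Type*} [Fintype α] {P : Matrix α α ℝ} {i : α}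
    (hP : ∀ h, 0 ≤ P i h) {d : α → ℕ} {δ : ℝ} (hδ0 : 0 ≤ δ) (hδ1 : δ ≤ 1) {h : α} (hdh : d h < d i)
    (hδP : 2 * δ ≤ P i h) :
    2 * δ ^ d i ≤ (P *ᵥ fun a ↦ δ ^ d a) i :=
  calc 2 * δ ^ d i ≤ 2 * δ ^ (d h + 1) :=
        mul_le_mul_of_nonneg_left (pow_le_pow_of_le_one hδ0 hδ1 hdh) zero_le_two
    _ = 2 * δ * δ ^ d h := by ring
    _ ≤ P i h * δ ^ d h := by gcongr
    _ ≤ ∑ a, P i a * δ ^ d a :=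
      Finset.single_le_sum (f := fun a ↦ P i a * δ ^ d a)
        (fun a _ ↦ mul_nonneg (hP a) (pow_nonneg hδ0 _)) (Finset.mem_univ h)

section Drift

variable {α : Type*} [Fintype α] [DecidableEq α] {P : Matrix α α ℝ} {j : α}

/-- The Foster–Lyapunov drift condition for hitting `j`: one step of `P` contracts the nonnegative
function `V` by the factor `c`, where reaching the target `j` counts as `1` instead of `V j`. -/
def IsHittingDrift (P : Matrix α α ℝ) (j : α) (c : ℝ) (V : α → ℝ) : Prop :=
  0 ≤ V ∧ P *ᵥ Function.update V j 1 ≤ c • V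

lemma isHittingDrift_one (hP : P *ᵥ 1 ≤ 1) : IsHittingDrift P j 1 1 := by
  have hupdate : Function.update (1 : α → ℝ) j 1 = 1 := Function.update_eq_self j (1 : α → ℝ)
  exact ⟨zero_le_one, by rwa [hupdate, one_smul]⟩

-- For `i ≠ j` the rate comes from `2 - 2 * x ≤ (1 - x / 2) * (2 - x)` with `x = δ ^ d i`. At `j`,
-- where `d` need not decrease, the value `4` makes the bound `2` a contraction by `1 / 2`.
lemma isHittingDrift_of_rank (hP : P ∈ rowStochastic ℝ α) {d : α → ℕ} {N : ℕ} {δ : ℝ}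
    (hdN : ∀ i, d i ≤ N) (hδ0 : 0 ≤ δ) (hδ1 : δ ≤ 1)
    (hd : ∀ i ≠ j, ∃ h, d h < d i ∧ 2 * δ ≤ P i h) :
    IsHittingDrift P j (1 - δ ^ N / 2) (fun i ↦ if i = j then 4 else 2 - δ ^ d i) := by
  have hpow : ∀ m : ℕ, 0 ≤ δ ^ m ∧ δ ^ m ≤ 1 := fun m ↦ ⟨pow_nonneg hδ0 m, pow_le_one₀ hδ0 hδ1⟩
  refine ⟨fun i ↦ ?_, fun i ↦ ?_⟩
  · dsimp only [Pi.zero_apply]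
    split_ifs <;> linarith [hpow (d i)]
  have hupdate : Function.update (fun i ↦ if i = j then (4 : ℝ) else 2 - δ ^ d i) j 1 ≤
      fun a ↦ 2 - δ ^ d a := by
    intro a
    rcases eq_or_ne a j with rfl | ha
    · rw [Function.update_self]
      linarith [hpow (d a)]
    · rw [Function.update_of_ne ha, if_neg ha]
  refine (dotProduct_le_dotProduct_of_nonneg_left hupdate (hP.1 i)).trans ?_
  change (P *ᵥ fun a ↦ 2 - δ ^ d a) i ≤ (1 - δ ^ N / 2) * if i = j then 4 else 2 - δ ^ d i
  have hmass : (P *ᵥ fun a ↦ 2 - δ ^ d a) i = 2 - (P *ᵥ fun a ↦ δ ^ d a) i := by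
    simp only [Matrix.mulVec, dotProduct, mul_sub, Finset.sum_sub_distrib, ← Finset.sum_mul,
      Matrix.sum_row_of_mem_rowStochastic hP, one_mul]
  rw [hmass]
  split_ifs with hij
  · have hnonneg : 0 ≤ (P *ᵥ fun a ↦ δ ^ d a) i :=
      Matrix.nonneg_mulVec_of_mem_rowStochastic hP (fun a ↦ (hpow (d a)).1) i
    linarith [hpow N]
  · obtain ⟨h, hdh, hδP⟩ := hd i hij
    have hNi : δ ^ N ≤ δ ^ d i := pow_le_pow_of_le_one hδ0 hδ1 (hdN i)
    calc 2 - (P *ᵥ fun a ↦ δ ^ d a) i ≤ 2 - 2 * δ ^ d i :=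
          sub_le_sub_left (two_mul_pow_le_mulVec (hP.1 i) hδ0 hδ1 hdh hδP) 2
      _ ≤ (1 - δ ^ d i / 2) * (2 - δ ^ d i) := by linarith [sq_nonneg (δ ^ d i)]
      _ ≤ (1 - δ ^ N / 2) * (2 - δ ^ d i) := by
        gcongr
        linarith [hpow (d i)]

lemma exists_uniform_isHittingDrift {r : α → α → Prop} (hr : ∀ i, Relation.ReflTransGen r i j)
    {ε : ℝ} (hε : 0 < ε) :
    ∃ V : α → ℝ, ∃ c ∈ Set.Ioo (0 : ℝ) 1, ∀ P ∈ rowStochastic ℝ α,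
      (∀ i h, r i h → ε ≤ P i h) → IsHittingDrift P j c V := by
  obtain ⟨d, hd⟩ := exists_rank_of_reflTransGen hr
  obtain ⟨N, hdN⟩ := Finite.exists_le d
  set δ : ℝ := min ε 1 / 2 with hδ
  have hδ0 : 0 < δ := by positivity
  have hδ1 : δ ≤ 1 := by linarith [min_le_right ε 1]
  have hδε : 2 * δ ≤ ε := by linarith [min_le_left ε 1]
  have hN0 : 0 < δ ^ N := by positivity
  have hN1 : δ ^ N ≤ 1 := pow_le_one₀ hδ0.le hδ1
  refine ⟨_, 1 - δ ^ N / 2, ⟨by linarith, by linarith⟩, fun P hP hPε ↦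
    isHittingDrift_of_rank hP hdN hδ0.le hδ1 fun i hij ↦ ?_⟩
  obtain ⟨h, hdh, hrih⟩ := hd i hij
  exact ⟨h, hdh, hδε.trans (hPε i h hrih)⟩

end Drift

namespace IsHittingProb

variable {n : ℕ} {P : Matrix (Fin n) (Fin n) ℝ} {W : Matrix (Fin n) (Fin n) ℕ}
  {F : ℤ → Fin n → Fin n → ℝ}

lemma eq_sum (hF : IsHittingProb P W F) {k : ℤ} (hk : 1 ≤ k) (i j : Fin n) :
    F k i j = ∑ h, P i h *
      if h = j then (if k = W i h then 1 else 0) else F (k - W i h) h j := by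
  have htarget : (if k = W i j then P i j else 0) =
      ∑ h, if h = j then P i h * (if k = W i h then 1 else 0) else 0 := by
    simp only [Finset.sum_ite_eq', Finset.mem_univ, if_true, mul_ite, mul_one, mul_zero]
  rw [hF.2 k hk, htarget, ← Finset.sum_add_distrib]
  refine Finset.sum_congr rfl fun h _ ↦ ?_
  split_ifs <;> ring

lemma nonneg (hF : IsHittingProb P W F) (hP : ∀ i h, 0 ≤ P i h) (hW : ∀ i h, W i h = 0 → P i h = 0)
    (k : ℤ) (i j : Fin n) : 0 ≤ F k i j := by
  induction k using Int.strongRec (m := 1) generalizing i with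
  | lt k hk => exact (hF.1 k (by lia) i j).ge
  | ge k hk ih =>
    rw [hF.eq_sum hk]
    refine Finset.sum_nonneg fun h _ ↦ ?_
    rcases Nat.eq_zero_or_pos (W i h) with hzero | hpos
    · rw [hW i h hzero, zero_mul]
    refine mul_nonneg (hP i h) ?_
    split_ifs
    · exact zero_le_one
    · exact le_rfl
    · exact ih _ (by lia) h

lemma le_mulVec_update_mul_zpow (hF : IsHittingProb P W F) (hP : ∀ i h, 0 ≤ P i h)
    (hW : ∀ i h, W i h = 0 → P i h = 0) {M : ℕ} (hM : ∀ i h, W i h ≤ M) {j : Fin n} {ρ : ℝ}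
    (hρ0 : 0 < ρ) (hρ1 : ρ ≤ 1) {V : Fin n → ℝ} (hV : 0 ≤ V) {k : ℤ} (hk : 1 ≤ k)
    (hlt : ∀ l < k, ∀ h, F l h j ≤ V h * ρ ^ l) (i : Fin n) :
    F k i j ≤ (P *ᵥ Function.update V j 1) i * ρ ^ (k - M) := by
  rw [hF.eq_sum hk, Matrix.mulVec, dotProduct, Finset.sum_mul]
  refine Finset.sum_le_sum fun h _ ↦ ?_
  rcases Nat.eq_zero_or_pos (W i h) with hzero | hpos
  · simp only [hW i h hzero, zero_mul, le_refl]
  rw [mul_assoc]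
  refine mul_le_mul_of_nonneg_left ?_ (hP i h)
  have hWM : (W i h : ℤ) ≤ M := mod_cast hM i h
  split_ifs with hhj hkW
  · rw [hhj, Function.update_self, one_mul]
    exact one_le_zpow_of_nonpos₀ hρ0 hρ1 (by lia)
  · rw [hhj, Function.update_self, one_mul]
    exact (zpow_pos hρ0 _).le
  · rw [Function.update_of_ne hhj]
    calc F (k - W i h) h j ≤ V h * ρ ^ (k - W i h : ℤ) := hlt _ (by lia) h
      _ ≤ V h * ρ ^ (k - M : ℤ) :=
        mul_le_mul_of_nonneg_left (zpow_le_zpow_right_of_le_one₀ hρ0 hρ1 (by lia)) (hV h)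

lemma le_mul_zpow (hF : IsHittingProb P W F) (hP : ∀ i h, 0 ≤ P i h)
    (hW : ∀ i h, W i h = 0 → P i h = 0) {M : ℕ} (hM : ∀ i h, W i h ≤ M) {j : Fin n} {ρ : ℝ}
    (hρ0 : 0 < ρ) (hρ1 : ρ ≤ 1) {V : Fin n → ℝ} (hV : IsHittingDrift P j (ρ ^ M) V) (k : ℤ)
    (i : Fin n) : F k i j ≤ V i * ρ ^ k := by
  induction k using Int.strongRec (m := 1) generalizing i with
  | lt k hk =>
    rw [hF.1 k (by lia)]
    exact mul_nonneg (hV.1 i) (zpow_pos hρ0 k).le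
  | ge k hk ih =>
    calc F k i j ≤ (P *ᵥ Function.update V j 1) i * ρ ^ (k - M) :=
          hF.le_mulVec_update_mul_zpow hP hW hM hρ0 hρ1 hV.1 hk ih i
      _ ≤ (ρ ^ M * V i) * ρ ^ (k - M) :=
        mul_le_mul_of_nonneg_right (hV.2 i) (zpow_pos hρ0 _).le
      _ = V i * ρ ^ k := by
        rw [mul_comm (ρ ^ M), mul_assoc, ← zpow_natCast, ← zpow_add₀ hρ0.ne', add_sub_cancel]

lemma le_one (hF : IsHittingProb P W F) (hP : P ∈ rowStochastic ℝ (Fin n))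
    (hW : ∀ i h, W i h = 0 → P i h = 0) (k : ℤ) (i j : Fin n) : F k i j ≤ 1 := by
  obtain ⟨M, hM⟩ := Finite.exists_le fun e : Fin n × Fin n ↦ W e.1 e.2
  have hdrift : IsHittingDrift P j ((1 : ℝ) ^ M) 1 := by
    rw [one_pow]
    exact isHittingDrift_one hP.2.le
  simpa using hF.le_mul_zpow hP.1 hW (fun i h ↦ hM (i, h)) one_pos le_rfl hdrift k i

lemma continuousOn {S : Set (Matrix (Fin n) (Fin n) ℝ)}
    {F : Matrix (Fin n) (Fin n) ℝ → ℤ → Fin n → Fin n → ℝ}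
    (hF : ∀ P ∈ S, IsHittingProb P W (F P)) (hW : ∀ P ∈ S, ∀ i h, W i h = 0 → P i h = 0)
    (k : ℤ) (i j : Fin n) : ContinuousOn (fun P ↦ F P k i j) S := by
  induction k using Int.strongRec (m := 1) generalizing i with
  | lt k hk =>
    exact (continuousOn_const (c := (0 : ℝ))).congr fun P hP ↦ (hF P hP).1 k (by lia) i j
  | ge k hk ih =>
    refine ContinuousOn.congr (continuousOn_finsetSum _ fun h _ ↦ ?_)
      fun P hP ↦ (hF P hP).eq_sum hk i j
    rcases Nat.eq_zero_or_pos (W i h) with hzero | hpos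
    · exact (continuousOn_const (c := (0 : ℝ))).congr fun P hP ↦ by
        simp only [hW P hP i h hzero, zero_mul]
    refine (continuous_apply_apply i h).continuousOn.mul ?_
    split_ifs
    · exact continuousOn_const
    · exact continuousOn_const
    · exact ih _ (by lia) h

end IsHittingProb

section UniformBounds

variable {n : ℕ} {Adj : Fin n → Fin n → Prop} {W : Matrix (Fin n) (Fin n) ℕ} {ε : ℝ}
  {S : Set (Matrix (Fin n) (Fin n) ℝ)} {F : Matrix (Fin n) (Fin n) ℝ → ℤ → Fin n → Fin n → ℝ}

lemma exists_geometric_bound_hittingProb {j : Fin n}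
    (hconn : ∀ i, Relation.ReflTransGen Adj i j) (hε : 0 < ε) (hS : S ⊆ rowStochastic ℝ (Fin n))
    (hAdj : ∀ P ∈ S, ∀ i h, Adj i h → ε ≤ P i h) (hW : ∀ P ∈ S, ∀ i h, W i h = 0 → P i h = 0)
    (hF : ∀ P ∈ S, IsHittingProb P W (F P)) :
    ∃ V : Fin n → ℝ, ∃ ρ ∈ Set.Ioo (0 : ℝ) 1, ∀ P ∈ S, ∀ k i, F P k i j ≤ V i * ρ ^ k := by
  obtain ⟨V, c, ⟨hc0, hc1⟩, hdrift⟩ := exists_uniform_isHittingDrift hconn hε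
  obtain ⟨M, hM⟩ := Finite.exists_le fun e : Fin n × Fin n ↦ W e.1 e.2
  -- `M + 1` instead of `M`: if `M = 0`, the exponent `M⁻¹` is a junk value.
  set ρ : ℝ := c ^ ((M + 1 : ℕ) : ℝ)⁻¹
  have hρ0 : 0 < ρ := rpow_pos_of_pos hc0 _
  have hρ1 : ρ < 1 := rpow_lt_one hc0.le hc1 (by positivity)
  have hρc : ρ ^ (M + 1) = c := rpow_inv_natCast_pow hc0.le M.succ_ne_zero
  refine ⟨V, ρ, ⟨hρ0, hρ1⟩, fun P hP k i ↦ ?_⟩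
  refine (hF P hP).le_mul_zpow (hS hP).1 (hW P hP) (fun i h ↦ (hM (i, h)).trans M.le_succ) hρ0
    hρ1.le ?_ k i
  rw [hρc]
  exact hdrift P (hS hP) (hAdj P hP)

lemma exists_summable_bound_negMulLog_hittingProb {j : Fin n}
    (hconn : ∀ i, Relation.ReflTransGen Adj i j) (hε : 0 < ε) (hS : S ⊆ rowStochastic ℝ (Fin n))
    (hAdj : ∀ P ∈ S, ∀ i h, Adj i h → ε ≤ P i h) (hW : ∀ P ∈ S, ∀ i h, W i h = 0 → P i h = 0)
    (hF : ∀ P ∈ S, IsHittingProb P W (F P)) (i : Fin n) :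
    ∃ u : ℕ → ℝ, Summable u ∧ ∀ k : ℕ, ∀ P ∈ S, ‖negMulLog (F P ((k : ℤ) + 1) i j)‖ ≤ u k := by
  obtain ⟨V, ρ, ⟨hρ0, hρ1⟩, hbound⟩ := exists_geometric_bound_hittingProb hconn hε hS hAdj hW hF
  have hgeom : Summable fun k : ℕ ↦ √ρ ^ k :=
    summable_geometric_of_lt_one (sqrt_nonneg ρ) ((sqrt_lt' one_pos).2 (by rwa [one_pow]))
  refine ⟨fun k ↦ 2 * (√(V i) * √ρ ^ (k + 1)),
    (((summable_nat_add_iff 1).2 hgeom).mul_left _).mul_left _, fun k P hP ↦ ?_⟩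
  have hsqrt : √(ρ ^ (k + 1)) = √ρ ^ (k + 1) := by
    simpa using Real.sqrt_prod (Finset.range (k + 1)) fun _ _ ↦ hρ0.le
  have hle : F P ((k : ℤ) + 1) i j ≤ V i * ρ ^ (k + 1) := mod_cast hbound P hP (k + 1) i
  calc ‖negMulLog (F P ((k : ℤ) + 1) i j)‖ ≤ 2 * √(F P ((k : ℤ) + 1) i j) :=
        norm_negMulLog_le_two_mul_sqrt ((hF P hP).nonneg (hS hP).1 (hW P hP) _ i j)
          ((hF P hP).le_one (hS hP) (hW P hP) _ i j)
    _ ≤ 2 * √(V i * ρ ^ (k + 1)) := by gcongr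
    _ = 2 * (√(V i) * √ρ ^ (k + 1)) := by rw [sqrt_mul' _ (by positivity), hsqrt]

end UniformBounds

lemma conf_subset_rowStochastic {n : ℕ} {Adj : Fin n → Fin n → Prop} {pivec : Fin n → ℝ} {ε : ℝ}
    (hε : 0 ≤ ε) : Conf Adj pivec ε ⊆ rowStochastic ℝ (Fin n) := by
  rintro P ⟨hAdj, hzero, hsum, -⟩
  refine Matrix.mem_rowStochastic_iff_sum.2 ⟨fun i j ↦ ?_, hsum⟩
  by_cases hij : Adj i j
  · exact hε.trans (hAdj i j hij)
  · exact (hzero i j hij).ge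

theorem return_time_entropy_continuity_general {n : ℕ}
    (Adj : Fin n → Fin n → Prop) (W : Matrix (Fin n) (Fin n) ℕ) (ε : ℝ)
    (hconn : ∀ i j, Relation.ReflTransGen Adj i j) (hε : 0 < ε)
    (S : Set (Matrix (Fin n) (Fin n) ℝ)) (hS : S ⊆ rowStochastic ℝ (Fin n))
    (hAdj : ∀ P ∈ S, ∀ i j, Adj i j → ε ≤ P i j) (hW : ∀ P ∈ S, ∀ i j, W i j = 0 → P i j = 0)
    (F : Matrix (Fin n) (Fin n) ℝ → ℤ → Fin n → Fin n → ℝ)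
    (hF : ∀ P ∈ S, IsHittingProb P W (F P)) :
    (∀ i j : Fin n,
      TendstoUniformlyOn
        (fun (N : ℕ) P ↦ ∑ k ∈ Finset.range N, negMulLog (F P ((k : ℤ) + 1) i j))
        (fun P ↦ ∑' k : ℕ, negMulLog (F P ((k : ℤ) + 1) i j)) atTop S) ∧
    (∀ i j : Fin n, ContinuousOn (fun P ↦ ∑' k : ℕ, negMulLog (F P ((k : ℤ) + 1) i j)) S) ∧
    ∀ c : Fin n → ℝ, ContinuousOn
      (fun P ↦ ∑ i : Fin n, c i * ∑' k : ℕ, negMulLog (F P ((k : ℤ) + 1) i i)) S := by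
  choose u hu hFu using fun i j ↦
    exists_summable_bound_negMulLog_hittingProb (hconn · j) hε hS hAdj hW hF i
  have hcont : ∀ i j : Fin n,
      ContinuousOn (fun P ↦ ∑' k : ℕ, negMulLog (F P ((k : ℤ) + 1) i j)) S := fun i j ↦
    continuousOn_tsum
      (fun k ↦ continuous_negMulLog.comp_continuousOn (IsHittingProb.continuousOn hF hW _ i j))
      (hu i j) (hFu i j)
  exact ⟨fun i j ↦ tendstoUniformlyOn_tsum_nat (hu i j) (hFu i j), hcont,
    fun c ↦ continuousOn_finsetSum _ fun i _ ↦ continuousOn_const.mul (hcont i i)⟩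

/-- the series `H(T_ii)(P) = −Σ_{k≥1} F_k(i,i) log F_k(i,i)`
converges uniformly on the `ε`-conforming set, and the functions
`P ↦ H(T_ii)(P)` and `P ↦ J(P) = Σ_i π_i H(T_ii)(P)` are continuous there. -/
theorem return_time_entropy_continuity {n : ℕ}
    (Adj : Fin n → Fin n → Prop) (W : Matrix (Fin n) (Fin n) ℕ)
    (pivec : Fin n → ℝ) (ε : ℝ)
    (hconn : ∀ i j, Relation.ReflTransGen Adj i j)
    (hW1 : ∀ i j, Adj i j → 1 ≤ W i j)
    (hW0 : ∀ i j, ¬ Adj i j → W i j = 0)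
    (hpi : ∀ i, 0 < pivec i) (hpisum : ∑ i, pivec i = 1)
    (hε : 0 < ε) (hne : (Conf Adj pivec ε).Nonempty)
    (F : Matrix (Fin n) (Fin n) ℝ → ℤ → Fin n → Fin n → ℝ)
    (hF : ∀ P ∈ Conf Adj pivec ε, IsHittingProb P W (F P)) :
    (∀ i : Fin n,
      TendstoUniformlyOn
        (fun (N : ℕ) (P : Matrix (Fin n) (Fin n) ℝ) =>
          ∑ k ∈ Finset.range N, Real.negMulLog (F P ((k : ℤ) + 1) i i))
        (fun P => ∑' k : ℕ, Real.negMulLog (F P ((k : ℤ) + 1) i i))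
        atTop (Conf Adj pivec ε)) ∧
    (∀ i : Fin n,
      ContinuousOn (fun P => ∑' k : ℕ, Real.negMulLog (F P ((k : ℤ) + 1) i i))
        (Conf Adj pivec ε)) ∧
    ContinuousOn
      (fun P => ∑ i : Fin n, pivec i * ∑' k : ℕ, Real.negMulLog (F P ((k : ℤ) + 1) i i))
      (Conf Adj pivec ε) := by
  obtain ⟨hunif, hcont, hsum⟩ := return_time_entropy_continuity_general Adj W ε hconn hε _
    (conf_subset_rowStochastic hε.le) (fun P hP ↦ hP.1)
    (fun P hP i j hij ↦ hP.2.1 i j fun hadj ↦ by simpa [hij] using hW1 i j hadj) F hF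
  exact ⟨fun i ↦ hunif i i, fun i ↦ hcont i i, hsum pivec⟩
end

section
/- Let G be a strongly connected directed graph with n nodes and unitary travel times (w_{ij} = 1 on every edge), let π > 0 be a stationary distribution, and let ε > 0 be such that P^ε_{G,π} is nonempty. Then for every P ∈ P^ε_{G,π}, the return time entropy satisfies J(P) ≤ −Σ_{i=1}^n ( π_i log π_i + (1 − π_i) log(1 − π_i) ). -/
open scoped BigOperators
open Real

/-- First hitting time probabilities for unitary travel times:
`F_1 = P` and `F_k(i,j) = Σ_{h≠j} p_{ih} F_{k−1}(h,j)` for `k ≥ 2`. -/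
def IsHittingProbUnit {n : ℕ} (P : Matrix (Fin n) (Fin n) ℝ)
    (F : ℕ → Fin n → Fin n → ℝ) : Prop :=
  (∀ i j, F 1 i j = P i j) ∧
    ∀ k : ℕ, 2 ≤ k → ∀ i j,
      F k i j = ∑ h : Fin n, if h = j then 0 else P i h * F (k - 1) h j

/-!
Let `T` be the return time to a state `j` and `u k = ℙ_j(T > k)`. Killing the chain on entry to `j`
removes mass `μ j * u k` from the stationary distribution `μ` at step `k`, so `μ j * ∑ u k ≤ 1`,
which is the inequality half of Kac's formula `𝔼 T = 1 / μ j`. Since `𝔼 T = ∑ u k`, the variable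
`T - 1` has mean at most `(1 - μ j) / μ j`. By Gibbs' inequality its entropy is at most its cross
entropy relative to the geometric distribution with success probability `μ j`, and the latter is
nondecreasing and affine in the mean, with value `binEntropy (μ j) / μ j` at `(1 - μ j) / μ j`.
-/

open Matrix Finset

section Gibbs

lemma negMulLog_le_neg_mul_log_add_sub {x y : ℝ} (hx : 0 ≤ x) (hy : 0 ≤ y) (hyx : y = 0 → x = 0) :
    negMulLog x ≤ -(x * log y) + y - x := by
  rcases hx.eq_or_lt with rfl | hx
  · simpa using hy
  have hy : 0 < y := hy.lt_of_ne' fun h ↦ hx.ne' (hyx h)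
  have hlog : x * (log y - log x) ≤ y - x := by
    rw [← log_div hy.ne' hx.ne']
    calc x * log (y / x) ≤ x * (y / x - 1) := by
          gcongr
          exact log_le_sub_one_of_pos (div_pos hy hx)
      _ = y - x := by field_simp
  rw [negMulLog]
  linarith

variable {α : Type*} {p q : α → ℝ}

lemma summable_negMulLog_of_summable_mul_log (hp0 : ∀ a, 0 ≤ p a) (hp : HasSum p 1)
    (hq0 : ∀ a, 0 ≤ q a) (hq : Summable q) (hqp : ∀ a, q a = 0 → p a = 0)
    (hlog : Summable fun a ↦ p a * log (q a)) : Summable fun a ↦ negMulLog (p a) :=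
  .of_nonneg_of_le (fun a ↦ negMulLog_nonneg (hp0 a) (le_hasSum hp a fun b _ ↦ hp0 b))
    (fun a ↦ negMulLog_le_neg_mul_log_add_sub (hp0 a) (hq0 a) (hqp a))
    ((hlog.neg.add hq).sub hp.summable)

theorem tsum_negMulLog_le_neg_tsum_mul_log (hp0 : ∀ a, 0 ≤ p a) (hp : HasSum p 1)
    (hq0 : ∀ a, 0 ≤ q a) (hq : HasSum q 1) (hqp : ∀ a, q a = 0 → p a = 0)
    (hlog : Summable fun a ↦ p a * log (q a)) :
    ∑' a, negMulLog (p a) ≤ -∑' a, p a * log (q a) := by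
  have hentropy := summable_negMulLog_of_summable_mul_log hp0 hp hq0 hq.summable hqp hlog
  calc ∑' a, negMulLog (p a) ≤ -(∑' a, p a * log (q a)) + 1 - 1 :=
        hasSum_le (fun a ↦ negMulLog_le_neg_mul_log_add_sub (hp0 a) (hq0 a) (hqp a))
          hentropy.hasSum ((hlog.hasSum.neg.add hq).sub hp)
    _ = -∑' a, p a * log (q a) := by ring

end Gibbs

section GeometricMaximizesEntropy

variable {f : ℕ → ℝ} {p : ℝ}

lemma hasSum_one_sub_pow_mul (hp0 : 0 < p) (hp1 : p ≤ 1) :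
    HasSum (fun k : ℕ ↦ (1 - p) ^ k * p) 1 :=
  ProbabilityTheory.hasSum_one_geometricMeasure (p := ⟨p, hp0.le, hp1⟩)
    fun h ↦ hp0.ne' (congrArg Subtype.val h)

lemma eq_zero_of_one_sub_pow_mul_eq_zero (hf0 : ∀ k, 0 ≤ f k)
    (hm : Summable fun k : ℕ ↦ k * f k) (hp0 : 0 < p) (hmean : p * ∑' k : ℕ, k * f k ≤ 1 - p)
    {k : ℕ} (hk : (1 - p) ^ k * p = 0) : f k = 0 := by
  obtain ⟨hp, hk⟩ : 1 - p = 0 ∧ k ≠ 0 := by simpa [hp0.ne', pow_eq_zero_iff'] using hk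
  have hmean : ∑' k : ℕ, k * f k ≤ 0 := nonpos_of_mul_nonpos_right (hp ▸ hmean) hp0
  have hterm : k * f k ≤ 0 :=
    (hm.le_tsum k fun l _ ↦ mul_nonneg l.cast_nonneg (hf0 l)).trans hmean
  exact (nonpos_of_mul_nonpos_right hterm (by positivity)).antisymm (hf0 k)

lemma mul_log_one_sub_pow_mul {x : ℝ} {k : ℕ} (hx : (1 - p) ^ k * p = 0 → x = 0) :
    x * log ((1 - p) ^ k * p) = x * log p + k * x * log (1 - p) := by
  by_cases hk : (1 - p) ^ k * p = 0
  · simp [hx hk]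
  · rw [log_mul (left_ne_zero_of_mul hk) (right_ne_zero_of_mul hk), log_pow]
    ring

lemma hasSum_mul_log_one_sub_pow_mul (hf0 : ∀ k, 0 ≤ f k) (hf : HasSum f 1)
    (hm : Summable fun k : ℕ ↦ k * f k) (hp0 : 0 < p) (hmean : p * ∑' k : ℕ, k * f k ≤ 1 - p) :
    HasSum (fun k ↦ f k * log ((1 - p) ^ k * p)) (log p + (∑' k : ℕ, k * f k) * log (1 - p)) := by
  simp_rw [mul_log_one_sub_pow_mul (eq_zero_of_one_sub_pow_mul_eq_zero hf0 hm hp0 hmean)]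
  simpa using (hf.mul_right (log p)).add (hm.hasSum.mul_right (log (1 - p)))

lemma summable_negMulLog_of_mean_le (hf0 : ∀ k, 0 ≤ f k) (hf : HasSum f 1)
    (hm : Summable fun k : ℕ ↦ k * f k) (hp0 : 0 < p) (hp1 : p ≤ 1)
    (hmean : p * ∑' k : ℕ, k * f k ≤ 1 - p) : Summable fun k ↦ negMulLog (f k) :=
  have : 0 ≤ 1 - p := sub_nonneg.2 hp1
  summable_negMulLog_of_summable_mul_log hf0 hf (fun k ↦ by positivity)
    (hasSum_one_sub_pow_mul hp0 hp1).summable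
    (fun _ ↦ eq_zero_of_one_sub_pow_mul_eq_zero hf0 hm hp0 hmean)
    (hasSum_mul_log_one_sub_pow_mul hf0 hf hm hp0 hmean).summable

lemma binEntropy_eq_neg_mul_log_add (p : ℝ) :
    binEntropy p = -(p * log p + (1 - p) * log (1 - p)) := by
  rw [binEntropy, log_inv, log_inv]
  ring

theorem mul_tsum_negMulLog_le_binEntropy (hf0 : ∀ k, 0 ≤ f k) (hf : HasSum f 1)
    (hm : Summable fun k : ℕ ↦ k * f k) (hp0 : 0 < p) (hp1 : p ≤ 1)
    (hmean : p * ∑' k : ℕ, k * f k ≤ 1 - p) :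
    p * ∑' k, negMulLog (f k) ≤ binEntropy p := by
  have h1p : 0 ≤ 1 - p := sub_nonneg.2 hp1
  have hcross := hasSum_mul_log_one_sub_pow_mul hf0 hf hm hp0 hmean
  have hgibbs : ∑' k, negMulLog (f k) ≤ -(log p + (∑' k : ℕ, k * f k) * log (1 - p)) :=
    hcross.tsum_eq ▸ tsum_negMulLog_le_neg_tsum_mul_log hf0 hf (fun k ↦ by positivity)
      (hasSum_one_sub_pow_mul hp0 hp1)
      (fun _ ↦ eq_zero_of_one_sub_pow_mul_eq_zero hf0 hm hp0 hmean) hcross.summable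
  have hlog : 0 ≤ -log (1 - p) := neg_nonneg.2 (log_nonpos h1p (sub_le_self 1 hp0.le))
  calc p * ∑' k, negMulLog (f k)
      ≤ p * -(log p + (∑' k : ℕ, k * f k) * log (1 - p)) := by gcongr
    _ = -(p * log p) + (p * ∑' k : ℕ, k * f k) * -log (1 - p) := by ring
    _ ≤ -(p * log p) + (1 - p) * -log (1 - p) := by gcongr
    _ = binEntropy p := by rw [binEntropy_eq_neg_mul_log_add]; ring

end GeometricMaximizesEntropy

section TailSums

lemma hasSum_sub_succ {M : Type*} [AddCommGroup M] [TopologicalSpace M] [IsTopologicalAddGroup M]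
    {u : ℕ → M} (hu : Summable u) : HasSum (fun k ↦ u k - u (k + 1)) (u 0) := by
  simpa using hu.hasSum.sub ((hasSum_nat_add_iff' 1).2 hu.hasSum)

lemma sum_range_natCast_mul_sub_succ {R : Type*} [Ring R] (u : ℕ → R) (N : ℕ) :
    ∑ k ∈ range N, (k : R) * (u k - u (k + 1)) = ∑ k ∈ range N, u (k + 1) - N * u N := by
  induction N with
  | zero => simp
  | succ N ih =>
    rw [sum_range_succ, ih, sum_range_succ]
    push_cast
    noncomm_ring

variable {u : ℕ → ℝ}

lemma sum_range_natCast_mul_sub_succ_le_tsum (hu0 : ∀ k, 0 ≤ u k) (hu : Summable u) (N : ℕ) :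
    ∑ k ∈ range N, (k : ℝ) * (u k - u (k + 1)) ≤ ∑' k, u (k + 1) :=
  calc ∑ k ∈ range N, (k : ℝ) * (u k - u (k + 1))
      = ∑ k ∈ range N, u (k + 1) - N * u N := sum_range_natCast_mul_sub_succ u N
    _ ≤ ∑ k ∈ range N, u (k + 1) := sub_le_self _ (mul_nonneg N.cast_nonneg (hu0 N))
    _ ≤ ∑' k, u (k + 1) := ((summable_nat_add_iff 1).2 hu).sum_le_tsum _ fun k _ ↦ hu0 (k + 1)

lemma summable_natCast_mul_sub_succ (hu0 : ∀ k, 0 ≤ u k) (hanti : Antitone u) (hu : Summable u) :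
    Summable fun k : ℕ ↦ k * (u k - u (k + 1)) :=
  summable_of_sum_range_le (fun k ↦ mul_nonneg k.cast_nonneg (sub_nonneg.2 (hanti k.le_succ)))
    (sum_range_natCast_mul_sub_succ_le_tsum hu0 hu)

lemma tsum_natCast_mul_sub_succ_le (hu0 : ∀ k, 0 ≤ u k) (hanti : Antitone u) (hu : Summable u) :
    ∑' k : ℕ, k * (u k - u (k + 1)) ≤ ∑' k, u (k + 1) :=
  Real.tsum_le_of_sum_range_le
    (fun k ↦ mul_nonneg k.cast_nonneg (sub_nonneg.2 (hanti k.le_succ)))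
    (sum_range_natCast_mul_sub_succ_le_tsum hu0 hu)

end TailSums

lemma pow_mulVec_nonneg {ι R : Type*} [Fintype ι] [DecidableEq ι] [Semiring R] [PartialOrder R]
    [IsOrderedRing R] {M : Matrix ι ι R} (hM : ∀ i j, 0 ≤ M i j) {v : ι → R} (hv : 0 ≤ v) (k : ℕ) :
    0 ≤ M ^ k *ᵥ v := by
  induction k with
  | zero => simpa using hv
  | succ k ih =>
    rw [pow_succ', ← mulVec_mulVec]
    exact fun i ↦ dotProduct_nonneg_of_nonneg (hM i) ih

section Taboo

variable {ι R : Type*} [DecidableEq ι]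

/-- The matrix of taboo transition probabilities of a chain `P` killed on entry to the state `j`. -/
def tabooMatrix [Zero R] (P : Matrix ι ι R) (j : ι) : Matrix ι ι R :=
  P.updateCol j 0

lemma tabooMatrix_nonneg [Zero R] [Preorder R] {P : Matrix ι ι R} (hP : ∀ i j, 0 ≤ P i j)
    (j i h : ι) : 0 ≤ tabooMatrix P j i h := by
  rw [tabooMatrix, updateCol_apply]
  split_ifs
  exacts [le_rfl, hP i h]

variable [Fintype ι]

lemma tabooMatrix_mulVec_apply [NonUnitalNonAssocSemiring R] (P : Matrix ι ι R) (j : ι)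
    (v : ι → R) (i : ι) :
    (tabooMatrix P j *ᵥ v) i = ∑ h, if h = j then 0 else P i h * v h := by
  simp [tabooMatrix, mulVec, dotProduct, updateCol_apply, ite_mul]

lemma tabooMatrix_mulVec_one [NonAssocRing R] (P : Matrix ι ι R) (j : ι) :
    tabooMatrix P j *ᵥ 1 = P *ᵥ 1 - P.col j := by
  ext i
  rw [tabooMatrix_mulVec_apply]
  simp [mulVec, dotProduct, sum_ite, filter_ne', sum_erase_eq_sub]

lemma vecMul_tabooMatrix [NonUnitalNonAssocSemiring R] (μ : ι → R) (P : Matrix ι ι R) (j : ι) :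
    μ ᵥ* tabooMatrix P j = Function.update (μ ᵥ* P) j 0 := by
  rw [tabooMatrix, vecMul_updateCol, dotProduct_zero]

end Taboo

section ReturnTime

variable {ι : Type*} [Fintype ι] [DecidableEq ι] {P : Matrix ι ι ℝ} {μ : ι → ℝ}

/-- `survivalProb P j k i` is the probability that the chain `P` started at `i` does not visit `j`
at any of the times `1, …, k`. -/
def survivalProb (P : Matrix ι ι ℝ) (j : ι) (k : ℕ) : ι → ℝ :=
  tabooMatrix P j ^ k *ᵥ 1

/-- `firstPassageProb P j k i` is the probability that the chain `P` started at `i` first visits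
`j` at time `k + 1`, so it is `F_{k+1}(i,j)` in the usual indexing from time `1`. -/
def firstPassageProb (P : Matrix ι ι ℝ) (j : ι) (k : ℕ) : ι → ℝ :=
  tabooMatrix P j ^ k *ᵥ P.col j

/-- The entropy `H(T_{jj})` of the first return time of the chain `P` to the state `j`. -/
noncomputable def returnTimeEntropy (P : Matrix ι ι ℝ) (j : ι) : ℝ :=
  ∑' k, negMulLog (firstPassageProb P j k j)

@[simp]
lemma survivalProb_zero (P : Matrix ι ι ℝ) (j : ι) : survivalProb P j 0 = 1 := by
  simp [survivalProb]

lemma survivalProb_succ (P : Matrix ι ι ℝ) (j : ι) (k : ℕ) :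
    survivalProb P j (k + 1) = tabooMatrix P j *ᵥ survivalProb P j k := by
  rw [survivalProb, pow_succ', ← mulVec_mulVec, survivalProb]

lemma survivalProb_nonneg (hP : ∀ i j, 0 ≤ P i j) (j : ι) (k : ℕ) : 0 ≤ survivalProb P j k :=
  pow_mulVec_nonneg (tabooMatrix_nonneg hP j) zero_le_one k

lemma firstPassageProb_nonneg (hP : ∀ i j, 0 ≤ P i j) (j : ι) (k : ℕ) :
    0 ≤ firstPassageProb P j k :=
  pow_mulVec_nonneg (tabooMatrix_nonneg hP j) (fun i ↦ hP i j) k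

lemma firstPassageProb_eq_survivalProb_sub (hP : P *ᵥ 1 = 1) (j : ι) (k : ℕ) :
    firstPassageProb P j k = survivalProb P j k - survivalProb P j (k + 1) := by
  have hcol : P.col j = 1 - tabooMatrix P j *ᵥ 1 := by rw [tabooMatrix_mulVec_one, hP]; abel
  rw [firstPassageProb, hcol, mulVec_sub, mulVec_mulVec, ← pow_succ, survivalProb, survivalProb]

lemma antitone_survivalProb (hP : P ∈ rowStochastic ℝ ι) (j : ι) : Antitone (survivalProb P j) :=
  antitone_nat_of_succ_le fun k ↦ by
    rw [← sub_nonneg, ← firstPassageProb_eq_survivalProb_sub (mem_rowStochastic.1 hP).2]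
    exact firstPassageProb_nonneg (mem_rowStochastic.1 hP).1 j k

lemma dotProduct_survivalProb_succ (hμ : μ ᵥ* P = μ) (j : ι) (k : ℕ) :
    μ ⬝ᵥ survivalProb P j (k + 1) = μ ⬝ᵥ survivalProb P j k - μ j * survivalProb P j k j := by
  rw [survivalProb_succ, dotProduct_mulVec, vecMul_tabooMatrix, hμ]
  simp [dotProduct, Function.update_apply, ite_mul, sum_ite, filter_ne', sum_erase_eq_sub]

lemma mul_sum_range_survivalProb_le (hP : ∀ i j, 0 ≤ P i j) (hμ0 : 0 ≤ μ) (hμ : μ ᵥ* P = μ)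
    (j : ι) (N : ℕ) : μ j * ∑ k ∈ range N, survivalProb P j k j ≤ ∑ i, μ i :=
  calc μ j * ∑ k ∈ range N, survivalProb P j k j
      = ∑ k ∈ range N, (μ ⬝ᵥ survivalProb P j k - μ ⬝ᵥ survivalProb P j (k + 1)) := by
        simp [mul_sum, dotProduct_survivalProb_succ hμ]
    _ = ∑ i, μ i - μ ⬝ᵥ survivalProb P j N := by
        rw [sum_range_sub', survivalProb_zero, dotProduct_one]
    _ ≤ ∑ i, μ i :=
        sub_le_self _ (dotProduct_nonneg_of_nonneg hμ0 (survivalProb_nonneg hP j N))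

lemma summable_survivalProb (hP : ∀ i j, 0 ≤ P i j) (hμ0 : 0 ≤ μ) (hμ : μ ᵥ* P = μ) {j : ι}
    (hj : 0 < μ j) : Summable fun k ↦ survivalProb P j k j :=
  summable_of_sum_range_le (fun k ↦ survivalProb_nonneg hP j k j) fun N ↦
    (le_div_iff₀' hj).2 (mul_sum_range_survivalProb_le hP hμ0 hμ j N)

theorem mul_tsum_survivalProb_le (hP : ∀ i j, 0 ≤ P i j) (hμ0 : 0 ≤ μ) (hμ : μ ᵥ* P = μ) {j : ι}
    (hj : 0 < μ j) : μ j * ∑' k, survivalProb P j k j ≤ ∑ i, μ i :=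
  (le_div_iff₀' hj).1 <| Real.tsum_le_of_sum_range_le (fun k ↦ survivalProb_nonneg hP j k j)
    fun N ↦ (le_div_iff₀' hj).2 (mul_sum_range_survivalProb_le hP hμ0 hμ j N)

section Stationary

variable (hP : P ∈ rowStochastic ℝ ι) (hμ0 : 0 ≤ μ) (hμ : μ ᵥ* P = μ) {j : ι} (hj : 0 < μ j)
include hP hμ0 hμ hj

lemma hasSum_firstPassageProb_self : HasSum (fun k ↦ firstPassageProb P j k j) 1 := by
  obtain ⟨hP0, hP1⟩ := mem_rowStochastic.1 hP
  simpa [firstPassageProb_eq_survivalProb_sub hP1]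
    using hasSum_sub_succ (summable_survivalProb hP0 hμ0 hμ hj)

lemma summable_natCast_mul_firstPassageProb_self :
    Summable fun k : ℕ ↦ k * firstPassageProb P j k j := by
  obtain ⟨hP0, hP1⟩ := mem_rowStochastic.1 hP
  simpa only [firstPassageProb_eq_survivalProb_sub hP1, Pi.sub_apply] using
    summable_natCast_mul_sub_succ (fun k ↦ survivalProb_nonneg hP0 j k j)
      (fun _ _ hkl ↦ antitone_survivalProb hP j hkl j) (summable_survivalProb hP0 hμ0 hμ hj)

lemma mul_tsum_natCast_mul_firstPassageProb_self_le :
    μ j * ∑' k : ℕ, k * firstPassageProb P j k j ≤ ∑ i, μ i - μ j := by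
  obtain ⟨hP0, hP1⟩ := mem_rowStochastic.1 hP
  have hu := summable_survivalProb hP0 hμ0 hμ hj
  have hmean : ∑' k : ℕ, k * firstPassageProb P j k j ≤ ∑' k, survivalProb P j (k + 1) j := by
    simpa only [firstPassageProb_eq_survivalProb_sub hP1, Pi.sub_apply] using
      tsum_natCast_mul_sub_succ_le (fun k ↦ survivalProb_nonneg hP0 j k j)
        (fun _ _ hkl ↦ antitone_survivalProb hP j hkl j) hu
  calc μ j * ∑' k : ℕ, k * firstPassageProb P j k j
      ≤ μ j * ∑' k, survivalProb P j (k + 1) j := by gcongr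
    _ = μ j * ∑' k, survivalProb P j k j - μ j := by
        rw [hu.tsum_eq_zero_add, survivalProb_zero, Pi.one_apply]
        ring
    _ ≤ ∑ i, μ i - μ j := by
        gcongr
        exact mul_tsum_survivalProb_le hP0 hμ0 hμ hj

variable (hsum : ∑ i, μ i = 1)
include hsum

lemma summable_negMulLog_firstPassageProb_self :
    Summable fun k ↦ negMulLog (firstPassageProb P j k j) :=
  summable_negMulLog_of_mean_le
    (fun k ↦ firstPassageProb_nonneg (mem_rowStochastic.1 hP).1 j k j)
    (hasSum_firstPassageProb_self hP hμ0 hμ hj)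
    (summable_natCast_mul_firstPassageProb_self hP hμ0 hμ hj) hj
    (hsum ▸ single_le_sum (fun i _ ↦ hμ0 i) (mem_univ j))
    (hsum ▸ mul_tsum_natCast_mul_firstPassageProb_self_le hP hμ0 hμ hj)

theorem mul_returnTimeEntropy_le_binEntropy : μ j * returnTimeEntropy P j ≤ binEntropy (μ j) :=
  mul_tsum_negMulLog_le_binEntropy
    (fun k ↦ firstPassageProb_nonneg (mem_rowStochastic.1 hP).1 j k j)
    (hasSum_firstPassageProb_self hP hμ0 hμ hj)
    (summable_natCast_mul_firstPassageProb_self hP hμ0 hμ hj) hj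
    (hsum ▸ single_le_sum (fun i _ ↦ hμ0 i) (mem_univ j))
    (hsum ▸ mul_tsum_natCast_mul_firstPassageProb_self_le hP hμ0 hμ hj)

end Stationary

theorem return_time_entropy_upper_bound_general (hP : P ∈ rowStochastic ℝ ι)
    (hpos : ∀ i, 0 < μ i) (hsum : ∑ i, μ i = 1) (hμ : μ ᵥ* P = μ) :
    (∀ i, Summable fun k ↦ negMulLog (firstPassageProb P i k i)) ∧
      ∑ i, μ i * returnTimeEntropy P i ≤ ∑ i, binEntropy (μ i) :=
  have hμ0 : 0 ≤ μ := fun i ↦ (hpos i).le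
  ⟨fun i ↦ summable_negMulLog_firstPassageProb_self hP hμ0 hμ (hpos i) hsum,
    sum_le_sum fun i _ ↦ mul_returnTimeEntropy_le_binEntropy hP hμ0 hμ (hpos i) hsum⟩

end ReturnTime

section Conforming

variable {n : ℕ} {Adj : Fin n → Fin n → Prop} {μ : Fin n → ℝ} {ε : ℝ}
  {P : Matrix (Fin n) (Fin n) ℝ} {F : ℕ → Fin n → Fin n → ℝ}

lemma mem_rowStochastic_of_mem_Conf (hε : 0 ≤ ε) (hP : P ∈ Conf Adj μ ε) :
    P ∈ rowStochastic ℝ (Fin n) := by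
  obtain ⟨hadj, hnadj, hrow, -⟩ := hP
  refine mem_rowStochastic_iff_sum.2 ⟨fun i j ↦ ?_, hrow⟩
  by_cases h : Adj i j
  · exact hε.trans (hadj i j h)
  · exact (hnadj i j h).ge

lemma vecMul_eq_self_of_mem_Conf (hP : P ∈ Conf Adj μ ε) : μ ᵥ* P = μ :=
  funext hP.2.2.2

lemma IsHittingProbUnit.eq_firstPassageProb (hF : IsHittingProbUnit P F) (k : ℕ) (i j : Fin n) :
    F (k + 1) i j = firstPassageProb P j k i := by
  induction k generalizing i with
  | zero => simp [hF.1, firstPassageProb]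
  | succ k ih =>
    rw [hF.2 (k + 2) (by lia), firstPassageProb, pow_succ', ← mulVec_mulVec,
      tabooMatrix_mulVec_apply]
    simp [ih, firstPassageProb]

end Conforming

/-- for a strongly connected graph with unitary travel times, the
return time entropy of every `ε`-conforming chain is upper bounded by
`−Σ_i (π_i log π_i + (1 − π_i) log(1 − π_i))`. -/
theorem return_time_entropy_upper_bound {n : ℕ}
    (Adj : Fin n → Fin n → Prop) (pivec : Fin n → ℝ) (ε : ℝ)
    (hconn : ∀ i j, Relation.ReflTransGen Adj i j)
    (hpi : ∀ i, 0 < pivec i) (hpisum : ∑ i, pivec i = 1)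
    (hε : 0 < ε) (hne : (Conf Adj pivec ε).Nonempty)
    (F : Matrix (Fin n) (Fin n) ℝ → ℕ → Fin n → Fin n → ℝ)
    (hF : ∀ P ∈ Conf Adj pivec ε, IsHittingProbUnit P (F P)) :
    ∀ P ∈ Conf Adj pivec ε,
      (∑ i : Fin n, pivec i * ∑' k : ℕ, Real.negMulLog (F P (k + 1) i i)) ≤
        -∑ i : Fin n,
          (pivec i * Real.log (pivec i) + (1 - pivec i) * Real.log (1 - pivec i)) := by
  intro P hP
  simp only [(hF P hP).eq_firstPassageProb, ← sum_neg_distrib, ← binEntropy_eq_neg_mul_log_add]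
  exact (return_time_entropy_upper_bound_general (mem_rowStochastic_of_mem_Conf hε.le hP) hpi
    hpisum (vecMul_eq_self_of_mem_Conf hP)).2
end
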